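/- arXiv:2011.04852 — 2 statements merged into one kernel-verified Lean document; each statement's English description precedes it below -/
import Mathlib

section
/- Let λ and ν be parameters with either λ > 0 and ν > 0, or ν = 0 and 0 < λ < 1. The Conway–Maxwell–Poisson distribution CMP(λ, ν) is infinitely divisible if and only if ν = 0 or ν = 1. -/
open MeasureTheory

/-- The Conway–Maxwell–Poisson distribution `CMP(λ, ν)`, viewed as a measure on `ℝ`
supported on the nonnegative integers: `P(X = k) = (1/Z(λ,ν)) · λ^k/(k!)^ν`. -/
noncomputable def cmpMeasure (lam nu : ℝ) : Measure ℝ :=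
  Measure.sum fun k : ℕ =>
    ENNReal.ofReal ((lam ^ k / (k.factorial : ℝ) ^ nu) /
        ∑' j : ℕ, lam ^ j / (j.factorial : ℝ) ^ nu) • Measure.dirac (k : ℝ)

/-- The `n`-fold convolution of a measure on `ℝ`: the pushforward of the `n`-fold
product measure under summation of coordinates. -/
noncomputable def nfoldConv (n : ℕ) (μ : Measure ℝ) : Measure ℝ :=
  Measure.map (fun x : Fin n → ℝ => ∑ i, x i) (Measure.pi fun _ : Fin n => μ)

/-- A measure `μ` on `ℝ` is infinitely divisible if for every positive integer `n`
there is a probability measure whose `n`-fold convolution equals `μ`. -/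
def InfinitelyDivisible (μ : Measure ℝ) : Prop :=
  ∀ n : ℕ, 0 < n → ∃ ν : Measure ℝ, IsProbabilityMeasure ν ∧ nfoldConv n ν = μ

open scoped NNReal ENNReal

/-- The discrete measure with weights given by the coefficients of a power series. -/
noncomputable def dm (F : PowerSeries ℝ≥0) : Measure ℝ :=
  Measure.sum fun k : ℕ => ((PowerSeries.coeff k F : ℝ≥0) : ℝ≥0∞) • Measure.dirac (k : ℝ)

instance dm_sfinite (F : PowerSeries ℝ≥0) : SFinite (dm F) := by
  unfold dm; infer_instance

lemma lintegral_dm (F : PowerSeries ℝ≥0) (f : ℝ → ℝ≥0∞) :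
    ∫⁻ x, f x ∂(dm F) = ∑' k : ℕ, ((PowerSeries.coeff k F : ℝ≥0) : ℝ≥0∞) * f k := by
  unfold dm
  rw [lintegral_sum_measure]
  simp only [lintegral_smul_measure, lintegral_dirac, smul_eq_mul]

lemma dm_apply (F : PowerSeries ℝ≥0) (s : Set ℝ) (hs : MeasurableSet s) :
    dm F s = ∑' k : ℕ, ((PowerSeries.coeff k F : ℝ≥0) : ℝ≥0∞) * s.indicator 1 (k : ℝ) := by
  unfold dm
  rw [Measure.sum_apply _ hs]
  simp only [Measure.smul_apply, Measure.dirac_apply' _ hs, smul_eq_mul]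

lemma dm_singleton (F : PowerSeries ℝ≥0) (k : ℕ) :
    dm F {(k : ℝ)} = ((PowerSeries.coeff k F : ℝ≥0) : ℝ≥0∞) := by
  rw [dm_apply _ _ (measurableSet_singleton _), tsum_eq_single k]
  · simp
  · intro j hj
    simp [Set.indicator, hj]

lemma dm_injective {F G : PowerSeries ℝ≥0} (h : dm F = dm G) : F = G := by
  ext k
  have h1 := dm_singleton F k
  rw [h, dm_singleton G k] at h1
  exact_mod_cast h1.symm

lemma dm_conv (F G : PowerSeries ℝ≥0) : (dm F) ∗ (dm G) = dm (F * G) := by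
  apply Measure.ext_of_lintegral
  intro f hf
  rw [Measure.lintegral_conv hf, lintegral_dm, lintegral_dm]
  simp_rw [lintegral_dm, ← ENNReal.tsum_mul_left]
  rw [← ENNReal.tsum_prod, ← Finset.HasAntidiagonal.sigmaAntidiagonalEquivProd.tsum_eq, ENNReal.tsum_sigma']
  congr 1
  ext n
  rw [tsum_fintype, PowerSeries.coeff_mul]
  push_cast
  rw [Finset.sum_mul, ← Finset.sum_coe_sort (Finset.HasAntidiagonal.antidiagonal n)]
  apply Finset.sum_congr rfl
  rintro ⟨⟨i, j⟩, hij⟩ -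
  have : i + j = n := by simpa using hij
  subst this
  simp [Finset.HasAntidiagonal.sigmaAntidiagonalEquivProd, mul_assoc]

lemma dm_one : dm 1 = Measure.dirac 0 := by
  apply Measure.ext_of_lintegral
  intro f hf
  rw [lintegral_dm, tsum_eq_single 0]
  · simp
  · intro k hk
    simp [PowerSeries.coeff_one, hk]

lemma nfoldConv_succ (n : ℕ) (μ : Measure ℝ) [IsProbabilityMeasure μ] :
    nfoldConv (n + 1) μ = μ ∗ nfoldConv n μ := by
  unfold nfoldConv
  have h := measurePreserving_piFinSuccAbove (fun _ : Fin (n + 1) => μ) 0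
  apply Measure.ext_of_lintegral
  intro f hf
  have hS : ∀ m : ℕ, Measurable (fun x : Fin m → ℝ => ∑ i, x i) := fun m => by fun_prop
  rw [Measure.lintegral_conv hf, lintegral_map hf (hS _)]
  have h2 : ∀ x : ℝ, ∫⁻ y, f (x + y) ∂(Measure.map (fun x : Fin n → ℝ => ∑ i, x i)
      (Measure.pi fun _ : Fin n => μ)) = ∫⁻ y : Fin n → ℝ, f (x + ∑ i, y i)
      ∂(Measure.pi fun _ : Fin n => μ) := by
    intro x
    rw [lintegral_map (by fun_prop) (hS _)]
  simp_rw [h2]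
  rw [← lintegral_prod (fun p : ℝ × (Fin n → ℝ) => f (p.1 + ∑ i, p.2 i)) (by fun_prop)]
  rw [← h.lintegral_comp (by fun_prop)]
  congr 1
  ext x
  rw [Fin.sum_univ_succ]
  rfl

lemma nfoldConv_zero (μ : Measure ℝ) [IsProbabilityMeasure μ] :
    nfoldConv 0 μ = Measure.dirac 0 := by
  unfold nfoldConv
  rw [Measure.pi_of_empty, Measure.map_dirac' (by fun_prop)]
  simp

lemma nfoldConv_dm (F : PowerSeries ℝ≥0) [IsProbabilityMeasure (dm F)] (n : ℕ) :
    nfoldConv n (dm F) = dm (F ^ n) := by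
  induction n with
  | zero => rw [nfoldConv_zero, pow_zero, dm_one]
  | succ n ih => rw [nfoldConv_succ, ih, dm_conv, pow_succ']

lemma dm_mass_mul (F G : PowerSeries ℝ≥0) :
    dm (F * G) Set.univ = dm F Set.univ * dm G Set.univ := by
  rw [← dm_conv, Measure.conv, Measure.map_apply (by fun_prop) MeasurableSet.univ]
  rw [Set.preimage_univ, ← Set.univ_prod_univ, Measure.prod_prod]

lemma dm_mass_pow (F : PowerSeries ℝ≥0) (n : ℕ) :
    dm (F ^ n) Set.univ = (dm F Set.univ) ^ n := by
  induction n with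
  | zero => simp [dm_one]
  | succ n ih => rw [pow_succ, dm_mass_mul, ih, pow_succ]

/-- An `n`-fold convolution root of a discrete measure charging zero is discrete. -/
lemma root_discrete (P : PowerSeries ℝ≥0) (hP : PowerSeries.coeff 0 P ≠ 0) (m : ℕ)
    (ρ : Measure ℝ) [IsProbabilityMeasure ρ] (h : nfoldConv (m + 1) ρ = dm P) :
    ∃ Q : PowerSeries ℝ≥0, ρ = dm Q := by
  have hS : Measurable (fun x : Fin (m + 1) → ℝ => ∑ i, x i) := by fun_prop
  have happ : ∀ s : Set ℝ, MeasurableSet s →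
      (Measure.pi fun _ : Fin (m + 1) => ρ) ((fun x : Fin (m + 1) → ℝ => ∑ i, x i) ⁻¹' s)
        = dm P s := by
    intro s hs
    rw [← h, nfoldConv, Measure.map_apply hS hs]
  have hneg : ρ (Set.Iio 0) = 0 := by
    have h0 : dm P (Set.Iio 0) = 0 := by
      rw [dm_apply _ _ measurableSet_Iio]
      simp [Set.indicator]
    have h1 : (Measure.pi fun _ : Fin (m + 1) => ρ) (Set.univ.pi fun _ => Set.Iio 0) = 0 := by
      refine measure_mono_null ?_ ((happ _ measurableSet_Iio).trans h0)
      intro x hx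
      simp only [Set.mem_pi, Set.mem_univ, Set.mem_Iio, forall_const, Set.mem_preimage] at hx ⊢
      exact Finset.sum_neg (fun i _ => hx i) Finset.univ_nonempty
    rw [Measure.pi_pi] at h1
    simpa using h1
  have hzero : ρ {0} ≠ 0 := by
    intro hz
    have h1 : (Measure.pi fun _ : Fin (m + 1) => ρ) (Function.eval 0 ⁻¹' {(0:ℝ)}) = 0 :=
      Measure.pi_eval_preimage_null _ hz
    have h2 : ∀ i, (Measure.pi fun _ : Fin (m + 1) => ρ) (Function.eval i ⁻¹' (Set.Iio (0:ℝ))) = 0 :=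
      fun i => Measure.pi_eval_preimage_null _ hneg
    have h3 : dm P {((0 : ℕ) : ℝ)} = 0 := by
      rw [← happ _ (measurableSet_singleton _)]
      refine measure_mono_null ?_ (measure_union_null h1 (measure_iUnion_null h2))
      intro x hx
      by_cases hx' : ∃ i, x i < 0
      · right
        simpa using hx'
      · left
        push Not at hx'
        have hx : ∑ i, x i = 0 := by simpa using hx
        rw [Finset.sum_eq_zero_iff_of_nonneg (fun i _ => hx' i)] at hx
        simpa using hx 0 (Finset.mem_univ _)
    rw [dm_singleton] at h3
    exact hP (by exact_mod_cast h3)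
  set N : Set ℝ := Set.range (fun k : ℕ => (k : ℝ)) with hN
  have hNm : MeasurableSet N := (Set.countable_range _).measurableSet
  have hA : ρ Nᶜ = 0 := by
    have h0 : dm P Nᶜ = 0 := by
      rw [dm_apply _ _ hNm.compl]
      simp [Set.indicator, hN]
    have h1 : (Measure.pi fun _ : Fin (m + 1) => ρ)
        (Set.univ.pi fun i => if i = 0 then Nᶜ else {0}) = 0 := by
      refine measure_mono_null ?_ ((happ _ hNm.compl).trans h0)
      intro x hx
      have hx : ∀ i, x i ∈ if i = 0 then Nᶜ else {0} := by simpa using hx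
      have h0' := hx 0
      have hs : ∀ i : Fin m, x i.succ = 0 := fun i => by simpa using hx i.succ
      show ∑ i, x i ∈ Nᶜ
      rw [Fin.sum_univ_succ]
      simpa [hs] using h0'
    rw [Measure.pi_pi, Fin.prod_univ_succ] at h1
    simpa [hzero] using h1
  refine ⟨PowerSeries.mk fun k => (ρ {(k : ℝ)}).toNNReal, ?_⟩
  have h1 : ρ = ρ.restrict (⋃ k : ℕ, {(k : ℝ)}) := by
    rw [Set.iUnion_singleton_eq_range, Measure.restrict_eq_self_of_ae_mem]
    exact hA
  rw [Measure.restrict_iUnion] at h1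
  · rw [dm]
    conv_lhs => rw [h1]
    congr 1
    ext1 k
    rw [Measure.restrict_singleton, PowerSeries.coeff_mk, ENNReal.coe_toNNReal (measure_ne_top _ _)]
  · intro i j hij
    simpa [Function.onFun] using hij
  · intro i
    exact measurableSet_singleton _

/-- Coefficients of the `n`-th root of a power series with logarithmic derivative `R`. -/
noncomputable def rootSeq (R : PowerSeries ℝ≥0) (n : ℕ) (c : ℝ≥0) : ℕ → ℝ≥0
  | 0 => c
  | k + 1 => (∑ j : Fin (k + 1), PowerSeries.coeff (k - j) R * rootSeq R n c j) / (n * (k + 1))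

lemma ode_unique (F G R : PowerSeries ℝ≥0) (h0 : PowerSeries.coeff 0 F = PowerSeries.coeff 0 G)
    (hF : PowerSeries.derivative ℝ≥0 F = R * F) (hG : PowerSeries.derivative ℝ≥0 G = R * G) :
    F = G := by
  ext k
  congr 1
  induction k using Nat.strong_induction_on with
  | _ k ih =>
    cases k with
    | zero => exact h0
    | succ k =>
      have h1 := congrArg (PowerSeries.coeff k) hF
      have h2 := congrArg (PowerSeries.coeff k) hG
      rw [PowerSeries.coeff_derivative, PowerSeries.coeff_mul] at h1 h2
      have h3 : ∑ p ∈ Finset.HasAntidiagonal.antidiagonal k, PowerSeries.coeff p.1 R * PowerSeries.coeff p.2 F =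
          ∑ p ∈ Finset.HasAntidiagonal.antidiagonal k, PowerSeries.coeff p.1 R * PowerSeries.coeff p.2 G := by
        apply Finset.sum_congr rfl
        intro p hp
        have : p.1 + p.2 = k := by simpa using hp
        rw [ih p.2 (by omega)]
      rw [h3, ← h2] at h1
      exact mul_right_cancel₀ (by positivity) h1

lemma exists_root (P R : PowerSeries ℝ≥0) (hR : PowerSeries.derivative ℝ≥0 P = R * P) (n : ℕ)
    (hn : 0 < n) : ∃ H : PowerSeries ℝ≥0, H ^ n = P := by
  set c : ℝ≥0 := (PowerSeries.coeff 0 P) ^ ((n : ℝ)⁻¹) with hc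
  set H : PowerSeries ℝ≥0 := PowerSeries.mk (rootSeq R n c) with hH
  have hode : (n : PowerSeries ℝ≥0) * PowerSeries.derivative ℝ≥0 H = R * H := by
    ext k
    congr 1
    rw [← nsmul_eq_mul, map_nsmul, PowerSeries.coeff_derivative, PowerSeries.coeff_mul, hH,
      PowerSeries.coeff_mk, rootSeq, ← Finset.Nat.sum_antidiagonal_swap,
      Finset.Nat.sum_antidiagonal_eq_sum_range_succ_mk, nsmul_eq_mul]
    rw [Fin.sum_univ_eq_sum_range
      (fun j => PowerSeries.coeff (k - j) R * rootSeq R n c j) (k + 1)]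
    have hn' : (n : ℝ≥0) ≠ 0 := by exact_mod_cast hn.ne'
    have hk' : (k : ℝ≥0) + 1 ≠ 0 := by positivity
    simp only [Prod.swap, PowerSeries.coeff_mk]
    field_simp
  refine ⟨H, ode_unique _ _ R ?_ ?_ hR⟩
  · rw [PowerSeries.coeff_zero_eq_constantCoeff_apply, map_pow,
      ← PowerSeries.coeff_zero_eq_constantCoeff_apply, hH, PowerSeries.coeff_mk, rootSeq, hc]
    exact NNReal.rpow_inv_natCast_pow _ hn.ne'
  · rw [Derivation.leibniz_pow, smul_eq_mul, nsmul_eq_mul]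
    calc (n : PowerSeries ℝ≥0) * (H ^ (n - 1) * PowerSeries.derivative ℝ≥0 H)
        = H ^ (n - 1) * ((n : PowerSeries ℝ≥0) * PowerSeries.derivative ℝ≥0 H) := by ring
      _ = R * (H ^ (n - 1) * H) := by rw [hode]; ring
      _ = R * H ^ n := by rw [← pow_succ, Nat.sub_add_cancel hn]

lemma id_of_ode (P R : PowerSeries ℝ≥0) (hR : PowerSeries.derivative ℝ≥0 P = R * P)
    (h1 : dm P Set.univ = 1) : InfinitelyDivisible (dm P) := by
  intro n hn
  obtain ⟨H, rfl⟩ := exists_root P R hR n hn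
  have hm : dm H Set.univ = 1 := by
    rw [dm_mass_pow] at h1
    exact (ENNReal.pow_right_strictMono hn.ne').injective (by simpa using h1)
  have : IsProbabilityMeasure (dm H) := ⟨hm⟩
  exact ⟨dm H, this, nfoldConv_dm H n⟩

open Filter Topology in
/-- An infinitely divisible law on the naturals charging zero has a nonnegative
logarithmic derivative. -/
lemma log_deriv_nonneg (P : PowerSeries ℝ≥0) (hP : PowerSeries.coeff 0 P ≠ 0)
    (hid : InfinitelyDivisible (dm P)) (R : PowerSeries ℝ)
    (hR : PowerSeries.derivative ℝ (P.map NNReal.toRealHom) = R * P.map NNReal.toRealHom)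
    (k : ℕ) : 0 ≤ PowerSeries.coeff k R := by
  have key : ∀ m : ℕ, ∃ q : ℕ → ℝ, (∀ i, 0 ≤ q i) ∧ (∀ i, i ≠ 0 → q i ≤ 1 - q 0) ∧
      q 0 = ((PowerSeries.coeff 0 P : ℝ≥0) : ℝ) ^ (((m + 1 : ℕ) : ℝ)⁻¹) ∧
      0 ≤ ∑ j ∈ Finset.range (k + 1), PowerSeries.coeff j R * q (k - j) := by
    intro m
    obtain ⟨ρ, hρ, h⟩ := hid (m + 1) (Nat.succ_pos m)
    obtain ⟨Q, rfl⟩ := root_discrete P hP m ρ h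
    rw [nfoldConv_dm] at h
    have hQ := dm_injective h
    have h0 : (PowerSeries.coeff 0 Q) ^ (m + 1) = PowerSeries.coeff 0 P := by
      rw [← hQ]
      simp
    refine ⟨fun i => (PowerSeries.coeff i Q : ℝ≥0), fun i => NNReal.coe_nonneg _, ?_, ?_, ?_⟩
    · intro i hi
      have h1 : dm Q ({((0 : ℕ) : ℝ)} ∪ {(i : ℝ)}) ≤ 1 := prob_le_one
      rw [measure_union (by simpa using Nat.cast_ne_zero.mpr hi |>.symm) (measurableSet_singleton _),
        dm_singleton, dm_singleton] at h1
      have h2 : PowerSeries.coeff 0 Q + PowerSeries.coeff i Q ≤ 1 := by exact_mod_cast h1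
      have h3 : ((PowerSeries.coeff 0 Q : ℝ≥0) : ℝ) + (PowerSeries.coeff i Q : ℝ≥0) ≤ 1 := by
        exact_mod_cast h2
      linarith
    · rw [← h0, NNReal.coe_pow]
      exact (Real.pow_rpow_inv_natCast (NNReal.coe_nonneg _) (Nat.succ_ne_zero m)).symm
    · set Q' := Q.map NNReal.toRealHom with hQ'
      have hQ0 : Q' ≠ 0 := by
        intro hz
        have h1 := congrArg (PowerSeries.coeff 0) hz
        rw [hQ', PowerSeries.coeff_map, map_zero] at h1
        have h2 : PowerSeries.coeff 0 Q = 0 := by simpa using h1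
        rw [h2] at h0
        exact hP (by rw [← h0]; simp)
      have h1 : R * Q' = ((m + 1 : ℕ) : PowerSeries ℝ) * PowerSeries.derivative ℝ Q' := by
        have h2 : P.map NNReal.toRealHom = Q' ^ (m + 1) := by rw [← hQ, map_pow]
        rw [h2, Derivation.leibniz_pow, smul_eq_mul, nsmul_eq_mul, Nat.add_sub_cancel] at hR
        apply mul_left_cancel₀ (pow_ne_zero m hQ0)
        linear_combination -hR
      have h2 := congrArg (PowerSeries.coeff k) h1
      rw [← nsmul_eq_mul, map_nsmul, PowerSeries.coeff_derivative, PowerSeries.coeff_mul,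
        Finset.Nat.sum_antidiagonal_eq_sum_range_succ_mk] at h2
      have h3 : ∀ i, PowerSeries.coeff i Q' = ((PowerSeries.coeff i Q : ℝ≥0) : ℝ) := by
        intro i
        rw [hQ', PowerSeries.coeff_map]; rfl
      simp only [h3] at h2
      rw [h2]
      positivity
  choose q hq0 hq1 hq2 hq3 using key
  have hp : 0 < ((PowerSeries.coeff 0 P : ℝ≥0) : ℝ) := by positivity
  have l0 : Tendsto (fun m => q m 0) atTop (𝓝 1) := by
    simp_rw [hq2]
    have h1 : Tendsto (fun m : ℕ => (((m + 1 : ℕ) : ℝ)⁻¹)) atTop (𝓝 0) :=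
      tendsto_inv_atTop_zero.comp (tendsto_natCast_atTop_atTop.comp (tendsto_add_atTop_nat 1))
    have h2 := (tendsto_const_nhds (x := ((PowerSeries.coeff 0 P : ℝ≥0) : ℝ))).rpow h1
      (Or.inl hp.ne')
    simpa using h2
  have li : ∀ i, i ≠ 0 → Tendsto (fun m => q m i) atTop (𝓝 0) := by
    intro i hi
    have h1 : Tendsto (fun m => 1 - q m 0) atTop (𝓝 0) := by
      simpa using (tendsto_const_nhds (x := (1:ℝ))).sub l0
    exact squeeze_zero (fun m => hq0 m i) (fun m => hq1 m i hi) h1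
  have hl : Tendsto (fun m => ∑ j ∈ Finset.range (k + 1), PowerSeries.coeff j R * q m (k - j))
      atTop (𝓝 (∑ j ∈ Finset.range (k + 1), PowerSeries.coeff j R * if j = k then 1 else 0)) := by
    apply tendsto_finsetSum
    intro j hj
    apply Tendsto.const_mul
    split_ifs with h
    · subst h; simpa using l0
    · exact li _ (by have := Finset.mem_range.mp hj; omega)
  have := ge_of_tendsto' hl hq3
  simpa using this

open Filter Topology in
lemma tendsto_descFactorial_div (j : ℕ) :
    Tendsto (fun k : ℕ => (k.descFactorial j : ℝ) / ((k : ℝ) + 1) ^ j) atTop (𝓝 1) := by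
  induction j with
  | zero => simp
  | succ j ih =>
    have h1 : Tendsto (fun k : ℕ => ((k - j : ℕ) : ℝ) / ((k : ℝ) + 1)) atTop (𝓝 1) := by
      have h2 : Tendsto (fun k : ℕ => 1 - ((j : ℝ) + 1) * (1 / ((k : ℝ) + 1))) atTop (𝓝 1) := by
        simpa using (tendsto_const_nhds (x := (1 : ℝ))).sub
          ((tendsto_one_div_add_atTop_nhds_zero_nat (𝕜 := ℝ)).const_mul ((j : ℝ) + 1))
      refine h2.congr' ?_
      filter_upwards [eventually_ge_atTop j] with k hk
      have : (k : ℝ) + 1 ≠ 0 := by positivity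
      rw [Nat.cast_sub hk]
      field_simp
      ring
    have h3 := h1.mul ih
    rw [mul_one] at h3
    refine h3.congr ?_
    intro k
    rw [Nat.descFactorial_succ]
    push_cast
    rw [pow_succ]
    have : (k : ℝ) + 1 ≠ 0 := by positivity
    field_simp

open Filter Topology in
lemma tendsto_D (nu : ℝ) (j : ℕ) :
    Tendsto (fun k : ℕ => ((k.descFactorial j : ℝ) ^ nu) / ((k : ℝ) + 1) ^ (j * nu))
      atTop (𝓝 1) := by
  have h := (tendsto_descFactorial_div j).rpow_const (p := nu) (Or.inl one_ne_zero)
  rw [Real.one_rpow] at h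
  refine h.congr ?_
  intro k
  rw [Real.div_rpow (by positivity) (by positivity), ← Real.rpow_natCast,
    ← Real.rpow_mul (by positivity)]

open Filter Topology in
lemma no_nonneg_sol (nu : ℝ) (h0 : 0 < nu) (h1 : nu < 1) (s : ℕ → ℝ) (hs : ∀ j, 0 ≤ s j)
    (h : ∀ k : ℕ, ∑ j ∈ Finset.range (k + 1), s j * (k.descFactorial j : ℝ) ^ nu
      = ((k : ℝ) + 1) ^ (1 - nu)) : False := by
  have hs0 : s 0 = 1 := by simpa using h 0
  have hk1 : Tendsto (fun k : ℕ => (k : ℝ) + 1) atTop atTop :=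
    tendsto_atTop_add_const_right _ _ tendsto_natCast_atTop_atTop
  have hfac : ∀ (j k : ℕ), ((k.descFactorial j : ℝ) ^ nu) / ((k : ℝ) + 1) ^ (1 - nu) =
      ((k.descFactorial j : ℝ) ^ nu) / ((k : ℝ) + 1) ^ (j * nu) *
        ((k : ℝ) + 1) ^ (j * nu - (1 - nu)) := by
    intro j k
    have : (0 : ℝ) < (k : ℝ) + 1 := by positivity
    rw [Real.rpow_sub this _ (1 - nu), div_mul_div_comm, mul_comm (((k : ℝ) + 1) ^ (j * nu)) (((k : ℝ) + 1) ^ (1 - nu)),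
      mul_div_mul_right _ _ (by positivity)]
  have hbig : ∀ j : ℕ, 1 - nu < j * nu → s j = 0 := by
    intro j hj
    by_contra hne
    have hpos : 0 < s j := lt_of_le_of_ne (hs j) (Ne.symm hne)
    have ht : Tendsto (fun k : ℕ => ((k.descFactorial j : ℝ) ^ nu) / ((k : ℝ) + 1) ^ (1 - nu))
        atTop atTop := by
      simp_rw [hfac]
      exact (tendsto_D nu j).pos_mul_atTop one_pos
        ((tendsto_rpow_atTop (by linarith)).comp hk1)
    obtain ⟨k, hk, hk2⟩ := ((ht.eventually_gt_atTop (1 / s j)).and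
      (eventually_ge_atTop j)).exists
    have hle : s j * (k.descFactorial j : ℝ) ^ nu ≤ ((k : ℝ) + 1) ^ (1 - nu) := by
      rw [← h k]
      exact Finset.single_le_sum (f := fun j => s j * (k.descFactorial j : ℝ) ^ nu)
        (fun i _ => mul_nonneg (hs i) (by positivity)) (Finset.mem_range.mpr (by omega))
    have hp : 0 < ((k : ℝ) + 1) ^ (1 - nu) := by positivity
    rw [div_lt_div_iff₀ hpos hp] at hk
    nlinarith
  obtain ⟨N, hN⟩ := exists_nat_gt ((1 - nu) / nu)
  rw [div_lt_iff₀ h0] at hN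
  have hbigN : ∀ j : ℕ, N ≤ j → s j = 0 := by
    intro j hj
    apply hbig
    have : (N : ℝ) ≤ j := by exact_mod_cast hj
    nlinarith
  have hsum : ∀ k : ℕ, N ≤ k →
      ∑ j ∈ Finset.range N, s j * (((k.descFactorial j : ℝ) ^ nu) / ((k : ℝ) + 1) ^ (1 - nu))
        = 1 := by
    intro k hk
    have hp : 0 < ((k : ℝ) + 1) ^ (1 - nu) := by positivity
    have h2 : ∑ j ∈ Finset.range N, s j * (k.descFactorial j : ℝ) ^ nu
        = ((k : ℝ) + 1) ^ (1 - nu) := by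
      rw [← h k]
      apply Finset.sum_subset (Finset.range_mono (by omega))
      intro j _ hj
      rw [hbigN j (by simpa using hj), zero_mul]
    simp_rw [← mul_div_assoc]
    rw [← Finset.sum_div, h2, div_self hp.ne']
  have hlim : Tendsto (fun k : ℕ => ∑ j ∈ Finset.range N,
      s j * (((k.descFactorial j : ℝ) ^ nu) / ((k : ℝ) + 1) ^ (1 - nu))) atTop
      (𝓝 (∑ j ∈ Finset.range N, if (j : ℝ) * nu = 1 - nu then s j else 0)) := by
    apply tendsto_finsetSum
    intro j _
    rcases lt_trichotomy ((j : ℝ) * nu) (1 - nu) with hj | hj | hj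
    · rw [if_neg hj.ne]
      have h3 : Tendsto (fun k : ℕ => ((k : ℝ) + 1) ^ (j * nu - (1 - nu))) atTop (𝓝 0) := by
        have := (tendsto_rpow_neg_atTop (y := 1 - nu - j * nu) (by linarith)).comp hk1
        rw [neg_sub] at this
        exact this
      simp_rw [hfac]
      simpa using ((tendsto_D nu j).mul h3).const_mul (s j)
    · rw [if_pos hj]
      have := (tendsto_D nu j).const_mul (s j)
      rw [hj] at this
      simpa using this
    · rw [if_neg hj.ne', hbig j hj]
      simp
  have hone : (∑ j ∈ Finset.range N, if (j : ℝ) * nu = 1 - nu then s j else 0) = 1 := by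
    refine tendsto_nhds_unique hlim (tendsto_const_nhds.congr' ?_)
    filter_upwards [eventually_ge_atTop N] with k hk
    exact (hsum k hk).symm
  obtain ⟨J, hJN, hJ⟩ : ∃ J ∈ Finset.range N, (J : ℝ) * nu = 1 - nu := by
    by_contra hcon
    push Not at hcon
    rw [Finset.sum_eq_zero] at hone
    · norm_num at hone
    · intro j hj
      rw [if_neg (hcon j hj)]
  have hsJ : s J = 1 := by
    rw [Finset.sum_eq_single_of_mem J hJN, if_pos hJ] at hone
    · exact hone
    · intro j _ hj
      rw [if_neg]
      intro hj2
      apply hj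
      have : (j : ℝ) * nu = J * nu := by rw [hj2, hJ]
      exact_mod_cast mul_right_cancel₀ h0.ne' this
  have hJ0 : J ≠ 0 := by
    rintro rfl
    simp at hJ
    linarith
  have hineq : ∀ t : ℕ, 1 ≤ (1 - nu) * J * ((t : ℝ) + 1) ^ (-nu) := by
    intro t
    have hge : s 0 * ((t + J).descFactorial 0 : ℝ) ^ nu +
        s J * ((t + J).descFactorial J : ℝ) ^ nu ≤ (((t + J : ℕ) : ℝ) + 1) ^ (1 - nu) := by
      rw [← h (t + J)]
      exact Finset.add_le_sum
        (f := fun j => s j * ((t + J).descFactorial j : ℝ) ^ nu)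
        (fun i _ => mul_nonneg (hs i) (by positivity)) (Finset.mem_range.mpr (by omega))
        (Finset.mem_range.mpr (by omega)) hJ0.symm
    have hd : ((t : ℝ) + 1) ^ (1 - nu) ≤ ((t + J).descFactorial J : ℝ) ^ nu := by
      have h4 := Nat.pow_sub_le_descFactorial (t + J) J
      have h5 : t + J + 1 - J = t + 1 := by omega
      rw [h5] at h4
      have h6 : ((t : ℝ) + 1) ^ J ≤ ((t + J).descFactorial J : ℝ) := by exact_mod_cast h4
      rw [← hJ, Real.rpow_mul (by positivity), Real.rpow_natCast]
      exact Real.rpow_le_rpow (by positivity) h6 h0.le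
    have ht : (0 : ℝ) < (t : ℝ) + 1 := by positivity
    have hb : (((t + J : ℕ) : ℝ) + 1) ^ (1 - nu) ≤
        ((t : ℝ) + 1) ^ (1 - nu) * (1 + (1 - nu) * (J / ((t : ℝ) + 1))) := by
      have h7 : (((t + J : ℕ) : ℝ) + 1) = ((t : ℝ) + 1) * (1 + J / ((t : ℝ) + 1)) := by
        push_cast
        field_simp
        ring
      rw [h7, Real.mul_rpow ht.le (by positivity)]
      apply mul_le_mul_of_nonneg_left _ (by positivity)
      have hJ' : (0 : ℝ) ≤ J / ((t : ℝ) + 1) := by positivity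
      exact rpow_one_add_le_one_add_mul_self (by linarith) (by linarith) (by linarith)
    have h8 : ((t : ℝ) + 1) ^ (1 - nu) = ((t : ℝ) + 1) * ((t : ℝ) + 1) ^ (-nu) := by
      rw [sub_eq_add_neg, Real.rpow_add ht, Real.rpow_one]
    have h9 : ((t : ℝ) + 1) ^ (1 - nu) * (1 + (1 - nu) * (J / ((t : ℝ) + 1))) =
        ((t : ℝ) + 1) ^ (1 - nu) + (1 - nu) * J * ((t : ℝ) + 1) ^ (-nu) := by
      rw [h8]
      field_simp
    rw [hs0, hsJ] at hge
    simp only [Nat.descFactorial_zero, Nat.cast_one, Real.one_rpow, one_mul] at hge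
    linarith
  have hto : Tendsto (fun t : ℕ => (1 - nu) * J * ((t : ℝ) + 1) ^ (-nu)) atTop (𝓝 0) := by
    simpa using ((tendsto_rpow_neg_atTop h0).comp hk1).const_mul ((1 - nu) * J)
  have := ge_of_tendsto' hto hineq
  norm_num at this

open Filter Topology in
lemma cmp_summable (lam nu : ℝ)
    (h : (0 < lam ∧ 0 < nu) ∨ (nu = 0 ∧ 0 < lam ∧ lam < 1)) :
    Summable (fun j : ℕ => lam ^ j / (j.factorial : ℝ) ^ nu) := by
  rcases h with ⟨hl, hn⟩ | ⟨rfl, hl, hl1⟩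
  · refine summable_of_ratio_test_tendsto_lt_one (l := 0) one_pos ?_ ?_
    · filter_upwards with k
      positivity
    · have hk1 : Tendsto (fun k : ℕ => (k : ℝ) + 1) atTop atTop :=
        tendsto_atTop_add_const_right _ _ tendsto_natCast_atTop_atTop
      have h1 := ((tendsto_rpow_neg_atTop hn).comp hk1).const_mul lam
      rw [mul_zero] at h1
      refine h1.congr ?_
      intro k
      rw [Real.norm_of_nonneg (by positivity), Real.norm_of_nonneg (by positivity),
        Nat.factorial_succ, Nat.cast_mul, Real.mul_rpow (by positivity) (by positivity)]
      push_cast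
      simp only [Function.comp]
      rw [Real.rpow_neg (by positivity)]
      field_simp
      ring
  · simpa using summable_geometric_of_lt_one hl.le hl1

/-- The probability generating function of `CMP(λ, ν)`, as a power series. -/
noncomputable def cmpSeries (lam nu : ℝ) : PowerSeries ℝ≥0 :=
  PowerSeries.mk fun k => ((lam ^ k / (k.factorial : ℝ) ^ nu) /
        ∑' j : ℕ, lam ^ j / (j.factorial : ℝ) ^ nu).toNNReal

lemma cmpMeasure_eq (lam nu : ℝ) : cmpMeasure lam nu = dm (cmpSeries lam nu) := by
  unfold cmpMeasure dm cmpSeries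
  simp only [PowerSeries.coeff_mk]
  rfl

lemma cmp_Z_pos (lam nu : ℝ)
    (h : (0 < lam ∧ 0 < nu) ∨ (nu = 0 ∧ 0 < lam ∧ lam < 1)) :
    0 < ∑' j : ℕ, lam ^ j / (j.factorial : ℝ) ^ nu := by
  have hl : 0 < lam := by rcases h with h | h <;> tauto
  exact (cmp_summable lam nu h).tsum_pos (fun j => by positivity) 0 (by simp)

lemma cmp_mass (lam nu : ℝ)
    (h : (0 < lam ∧ 0 < nu) ∨ (nu = 0 ∧ 0 < lam ∧ lam < 1)) :
    dm (cmpSeries lam nu) Set.univ = 1 := by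
  have hl : 0 < lam := by rcases h with h | h <;> tauto
  have hZ := cmp_Z_pos lam nu h
  rw [← cmpMeasure_eq, cmpMeasure, Measure.sum_apply _ MeasurableSet.univ]
  simp only [Measure.smul_apply, measure_univ, smul_eq_mul, mul_one]
  rw [← ENNReal.ofReal_tsum_of_nonneg (fun k => by positivity)
    ((cmp_summable lam nu h).div_const _), tsum_div_const, div_self hZ.ne', ENNReal.ofReal_one]

lemma cmp_coeff (lam nu : ℝ)
    (h : (0 < lam ∧ 0 < nu) ∨ (nu = 0 ∧ 0 < lam ∧ lam < 1)) (k : ℕ) :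
    ((PowerSeries.coeff k (cmpSeries lam nu) : ℝ≥0) : ℝ) =
      (lam ^ k / (k.factorial : ℝ) ^ nu) / ∑' j : ℕ, lam ^ j / (j.factorial : ℝ) ^ nu := by
  have hl : 0 < lam := by rcases h with h | h <;> tauto
  have hZ := cmp_Z_pos lam nu h
  rw [cmpSeries, PowerSeries.coeff_mk, Real.coe_toNNReal _ (by positivity)]

lemma cmp_recursion (lam nu : ℝ)
    (h : (0 < lam ∧ 0 < nu) ∨ (nu = 0 ∧ 0 < lam ∧ lam < 1))
    (hid : InfinitelyDivisible (cmpMeasure lam nu)) :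
    ∃ r : ℕ → ℝ, (∀ j, 0 ≤ r j) ∧ ∀ k : ℕ,
      ∑ j ∈ Finset.range (k + 1), r j * (lam ^ (k - j) / ((k - j).factorial : ℝ) ^ nu) =
        lam ^ (k + 1) / ((k + 1).factorial : ℝ) ^ nu * (k + 1) := by
  have hl : 0 < lam := by rcases h with h | h <;> tauto
  have hZ := cmp_Z_pos lam nu h
  rw [cmpMeasure_eq] at hid
  set P := (cmpSeries lam nu).map NNReal.toRealHom with hPdef
  have hcoef : ∀ k, PowerSeries.coeff k P =
      (lam ^ k / (k.factorial : ℝ) ^ nu) / ∑' j : ℕ, lam ^ j / (j.factorial : ℝ) ^ nu := by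
    intro k
    rw [hPdef, PowerSeries.coeff_map, ← cmp_coeff lam nu h k]
    rfl
  have hc0 : PowerSeries.constantCoeff P ≠ 0 := by
    rw [← PowerSeries.coeff_zero_eq_constantCoeff_apply, hcoef]
    positivity
  have hp0 : PowerSeries.coeff 0 (cmpSeries lam nu) ≠ 0 := by
    intro hz
    have := cmp_coeff lam nu h 0
    rw [hz] at this
    have h2 : 0 < (lam ^ 0 / (Nat.factorial 0 : ℝ) ^ nu) /
      ∑' j : ℕ, lam ^ j / (j.factorial : ℝ) ^ nu := by positivity
    rw [← this] at h2
    simp at h2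
  set R := PowerSeries.derivative ℝ P * P⁻¹ with hRdef
  have hR : PowerSeries.derivative ℝ P = R * P := by
    rw [hRdef, mul_assoc, PowerSeries.inv_mul_cancel _ hc0, mul_one]
  refine ⟨fun j => PowerSeries.coeff j R, log_deriv_nonneg _ hp0 hid R hR, ?_⟩
  intro k
  have h1 := congrArg (PowerSeries.coeff k) hR
  rw [PowerSeries.coeff_derivative, PowerSeries.coeff_mul,
    Finset.Nat.sum_antidiagonal_eq_sum_range_succ_mk] at h1
  simp only [hcoef] at h1
  simp_rw [← mul_div_assoc] at h1
  rw [← Finset.sum_div, div_mul_eq_mul_div, div_left_inj' hZ.ne'] at h1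
  simp_rw [← mul_div_assoc]
  exact h1.symm

lemma cmp_not_id (lam nu : ℝ) (hl : 0 < lam) (hn : 0 < nu) (hn1 : nu ≠ 1)
    (hid : InfinitelyDivisible (cmpMeasure lam nu)) : False := by
  obtain ⟨r, hr, hrec⟩ := cmp_recursion lam nu (Or.inl ⟨hl, hn⟩) hid
  rcases lt_or_gt_of_ne hn1 with hlt | hgt
  · apply no_nonneg_sol nu hn hlt (fun j => r j / lam ^ (j + 1))
      (fun j => div_nonneg (hr j) (by positivity))
    intro k
    have hk : (0 : ℝ) < (k.factorial : ℝ) ^ nu := by positivity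
    have h1 := hrec k
    have h2 : lam ^ (k + 1) / ((k + 1).factorial : ℝ) ^ nu * (k + 1) =
        ((k : ℝ) + 1) ^ (1 - nu) * (lam ^ (k + 1) / (k.factorial : ℝ) ^ nu) := by
      rw [Nat.factorial_succ, Nat.cast_mul, Real.mul_rpow (by positivity) (by positivity),
        Real.rpow_sub (by positivity), Real.rpow_one]
      push_cast
      field_simp
    rw [h2] at h1
    have h3 : 0 < lam ^ (k + 1) / (k.factorial : ℝ) ^ nu := by positivity
    apply mul_right_cancel₀ h3.ne'
    rw [← h1, Finset.sum_mul]
    apply Finset.sum_congr rfl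
    intro j hj
    have hjk : j ≤ k := by have := Finset.mem_range.mp hj; omega
    have h4 : (k.factorial : ℝ) ^ nu =
        ((k - j).factorial : ℝ) ^ nu * (k.descFactorial j : ℝ) ^ nu := by
      rw [← Real.mul_rpow (by positivity) (by positivity), ← Nat.cast_mul,
        Nat.factorial_mul_descFactorial hjk]
    have h5 : lam ^ (k + 1) = lam ^ (k - j) * lam ^ (j + 1) := by
      rw [← pow_add]; congr 1; omega
    have h6 : (0 : ℝ) < ((k - j).factorial : ℝ) ^ nu := by positivity
    have h7 : (k.descFactorial j : ℝ) ^ nu ≠ 0 := by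
      intro hz
      rw [hz, mul_zero] at h4
      exact hk.ne' h4
    rw [h4, h5]
    field_simp
  · have h0 := hrec 0
    have h1 := hrec 1
    have hr1 := hr 1
    simp [Finset.sum_range_succ] at h0 h1
    rw [h0] at h1
    have h2 : (2 : ℝ) < 2 ^ nu := by
      simpa using Real.rpow_lt_rpow_of_exponent_lt (x := 2) (by norm_num) hgt
    have h3 : lam ^ 2 / 2 ^ nu * (1 + 1) < lam ^ 2 := by
      rw [div_mul_eq_mul_div, div_lt_iff₀ (by positivity)]
      nlinarith [pow_pos hl 2]
    nlinarith

lemma cmp_id_zero (lam : ℝ) (hl : 0 < lam) (hl1 : lam < 1) :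
    InfinitelyDivisible (cmpMeasure lam 0) := by
  have h : (0 < lam ∧ (0 : ℝ) < 0) ∨ ((0 : ℝ) = 0 ∧ 0 < lam ∧ lam < 1) := Or.inr ⟨rfl, hl, hl1⟩
  rw [cmpMeasure_eq]
  apply id_of_ode _ (PowerSeries.mk fun j => (lam ^ (j + 1)).toNNReal) _ (cmp_mass _ _ h)
  ext k
  rw [PowerSeries.coeff_derivative, PowerSeries.coeff_mul,
    Finset.Nat.sum_antidiagonal_eq_sum_range_succ_mk]
  push_cast
  simp only [cmp_coeff _ _ h, PowerSeries.coeff_mk]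
  rw [Finset.sum_congr rfl (g := fun _ => lam ^ (k + 1) / ∑' j : ℕ, lam ^ j / (j.factorial : ℝ) ^ (0 : ℝ))]
  · simp
    ring
  · intro j hj
    have hjk : j ≤ k := by have := Finset.mem_range.mp hj; omega
    rw [Real.coe_toNNReal _ (by positivity), Real.rpow_zero, div_one, ← mul_div_assoc, ← pow_add]
    congr 2
    omega

lemma cmp_id_one (lam : ℝ) (hl : 0 < lam) :
    InfinitelyDivisible (cmpMeasure lam 1) := by
  have h : (0 < lam ∧ (0 : ℝ) < 1) ∨ ((1 : ℝ) = 0 ∧ 0 < lam ∧ lam < 1) := Or.inl ⟨hl, one_pos⟩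
  rw [cmpMeasure_eq]
  apply id_of_ode _ (PowerSeries.C lam.toNNReal) _ (cmp_mass _ _ h)
  ext k
  rw [PowerSeries.coeff_derivative, PowerSeries.coeff_C_mul]
  push_cast
  simp only [cmp_coeff _ _ h]
  rw [Real.coe_toNNReal _ hl.le, Nat.factorial_succ, Real.rpow_one, Real.rpow_one]
  have hZ := cmp_Z_pos lam 1 h
  push_cast
  field_simp
  ring

/-- The Conway–Maxwell–Poisson distribution `CMP(λ, ν)` (with `λ > 0, ν > 0` or
`ν = 0, 0 < λ < 1`) is infinitely divisible if and only if `ν = 0` or `ν = 1`. -/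
theorem cmp_infinitelyDivisible_iff (lam nu : ℝ)
    (h : (0 < lam ∧ 0 < nu) ∨ (nu = 0 ∧ 0 < lam ∧ lam < 1)) :
    InfinitelyDivisible (cmpMeasure lam nu) ↔ nu = 0 ∨ nu = 1 := by
  have hl : 0 < lam := by rcases h with h | h <;> tauto
  constructor
  · intro hid
    by_contra hcon
    push Not at hcon
    rcases h with ⟨_, hn⟩ | ⟨hn, _⟩
    · exact cmp_not_id lam nu hl hn hcon.2 hid
    · exact hcon.1 hn
  · rintro (rfl | rfl)
    · rcases h with ⟨_, hn⟩ | ⟨_, _, hl1⟩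
      · exact absurd hn (lt_irrefl _)
      · exact cmp_id_zero lam hl hl1
    · exact cmp_id_one lam hl
end

section
/- For every λ > 0 and every ν with 0 < ν < 1, the Conway–Maxwell–Poisson distribution CMP(λ, ν) is not infinitely divisible. -/
open MeasureTheory

open Filter Topology


theorem cmp_aux_real (s : ℕ → ℝ) (nu : ℝ) (hnu : 0 < nu) (hnu1 : nu < 1) (hs : ∀ m, 0 ≤ s m)
    (h : ∀ N : ℕ, 1 ≤ N → (N : ℝ) = ∑ m ∈ Finset.Icc 1 N, s m * ((N.descFactorial m : ℕ) : ℝ) ^ nu) :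
    False := by
  have hs1 : s 1 = 1 := by
    have := h 1 le_rfl
    simpa using this.symm
  have lower : ∀ N m : ℕ, m ≤ N → ((N + 1 - m : ℕ) : ℝ) ^ ((m : ℝ) * nu) ≤
      ((N.descFactorial m : ℕ) : ℝ) ^ nu := by
    intro N m _
    rw [Real.rpow_mul (by positivity), Real.rpow_natCast]
    apply Real.rpow_le_rpow (by positivity) _ hnu.le
    exact_mod_cast Nat.pow_sub_le_descFactorial N m
  have upper : ∀ N m : ℕ, ((N.descFactorial m : ℕ) : ℝ) ^ nu ≤ (N : ℝ) ^ ((m : ℝ) * nu) := by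
    intro N m
    rw [Real.rpow_mul (by positivity), Real.rpow_natCast]
    apply Real.rpow_le_rpow (by positivity) _ hnu.le
    exact_mod_cast Nat.descFactorial_le_pow N m
  have hzero : ∀ m : ℕ, 1 < (m : ℝ) * nu → s m = 0 := by
    intro m hm
    have hm1 : 1 ≤ m := by
      rcases Nat.eq_zero_or_pos m with h0 | h0
      · subst h0; norm_num at hm
      · exact h0
    by_contra hne
    have hpos : 0 < s m := lt_of_le_of_ne (hs m) (Ne.symm hne)
    have key : ∀ M : ℕ, 1 ≤ M → (M : ℝ) ^ ((m : ℝ) * nu - 1) ≤ (1 + m) / s m := by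
      intro M hM
      have hMr : (1 : ℝ) ≤ M := by exact_mod_cast hM
      have hN := h (M + m - 1) (by omega)
      have h1 : s m * (((M + m - 1).descFactorial m : ℕ) : ℝ) ^ nu ≤ ((M + m - 1 : ℕ) : ℝ) := by
        rw [hN]
        refine Finset.single_le_sum (f := fun m' => s m' * (((M + m - 1).descFactorial m' : ℕ) : ℝ) ^ nu)
          (fun i _ => mul_nonneg (hs i) (by positivity)) ?_
        simp; omega
      have h2 := lower (M + m - 1) m (by omega)
      have h3 : M + m - 1 + 1 - m = M := by omega
      rw [h3] at h2
      have h4 : ((M + m - 1 : ℕ) : ℝ) ≤ M + m := by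
        have : M + m - 1 ≤ M + m := by omega
        exact_mod_cast this
      rw [le_div_iff₀ hpos, Real.rpow_sub_one (by positivity), div_mul_eq_mul_div,
        div_le_iff₀ (by positivity)]
      have hmr : (0 : ℝ) ≤ m := by positivity
      nlinarith [mul_le_mul_of_nonneg_left h2 hpos.le]
    have ht : Tendsto (fun M : ℕ => (M : ℝ) ^ ((m : ℝ) * nu - 1)) atTop atTop :=
      (tendsto_rpow_atTop (by linarith)).comp tendsto_natCast_atTop_atTop
    obtain ⟨M, hM1, hM2⟩ := ((ht.eventually_gt_atTop ((1 + m) / s m)).and (eventually_ge_atTop 1)).exists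
    exact absurd (key M hM2) (not_le.mpr hM1)
  obtain ⟨K, hK⟩ := exists_nat_gt (1 / nu)
  have hK' : ∀ m : ℕ, K ≤ m → s m = 0 := by
    intro m hm
    apply hzero
    rw [div_lt_iff₀ hnu] at hK
    have : (K : ℝ) ≤ m := by exact_mod_cast hm
    nlinarith
  have hlim : Tendsto (fun N : ℕ => ∑ m ∈ Finset.range K, s m * (N : ℝ) ^ ((m : ℝ) * nu - 1)) atTop
      (𝓝 (∑ m ∈ Finset.range K, if (m : ℝ) * nu = 1 then s m else 0)) := by
    apply tendsto_finsetSum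
    intro m _
    split_ifs with hm
    · simp [hm]
    · rcases lt_or_gt_of_ne hm with h1 | h1
      · have : Tendsto (fun N : ℕ => (N : ℝ) ^ (-(1 - (m : ℝ) * nu))) atTop (𝓝 0) :=
          (tendsto_rpow_neg_atTop (by linarith)).comp tendsto_natCast_atTop_atTop
        simpa using this.const_mul (s m)
      · simp [hzero m h1]
  have hge : 1 ≤ ∑ m ∈ Finset.range K, if (m : ℝ) * nu = 1 then s m else 0 := by
    refine ge_of_tendsto hlim ?_
    filter_upwards [eventually_ge_atTop 1] with N hN
    have hNr : (0 : ℝ) < N := by exact_mod_cast hN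
    have h1 : (N : ℝ) ≤ ∑ m ∈ Finset.range K, s m * (N : ℝ) ^ ((m : ℝ) * nu) := by
      calc (N : ℝ) = ∑ m ∈ Finset.Icc 1 N, s m * ((N.descFactorial m : ℕ) : ℝ) ^ nu := h N hN
        _ ≤ ∑ m ∈ Finset.Icc 1 N, s m * (N : ℝ) ^ ((m : ℝ) * nu) := by
            apply Finset.sum_le_sum
            intro m _
            exact mul_le_mul_of_nonneg_left (upper N m) (hs m)
        _ ≤ ∑ m ∈ Finset.range K, s m * (N : ℝ) ^ ((m : ℝ) * nu) := by
            rw [← Finset.sum_filter_add_sum_filter_not (Finset.Icc 1 N) (fun m => m < K)]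
            have : ∑ x ∈ Finset.Icc 1 N with ¬ x < K, s x * (N : ℝ) ^ ((x : ℝ) * nu) = 0 := by
              apply Finset.sum_eq_zero
              intro x hx
              simp at hx
              simp [hK' x hx.2]
            rw [this, add_zero]
            apply Finset.sum_le_sum_of_subset_of_nonneg
            · intro x hx
              simp at hx ⊢
              exact hx.2
            · intro i _ _
              exact mul_nonneg (hs i) (by positivity)
    have h2 : ∑ m ∈ Finset.range K, s m * (N : ℝ) ^ ((m : ℝ) * nu - 1) =
        (∑ m ∈ Finset.range K, s m * (N : ℝ) ^ ((m : ℝ) * nu)) / N := by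
      rw [Finset.sum_div]
      apply Finset.sum_congr rfl
      intro m _
      rw [Real.rpow_sub_one hNr.ne']
      ring
    rw [h2, le_div_iff₀ hNr]
    linarith
  have hd : ∃ d : ℕ, (d : ℝ) * nu = 1 := by
    by_contra hno
    push Not at hno
    rw [Finset.sum_eq_zero (fun m _ => by simp [hno m])] at hge
    linarith
  obtain ⟨d, hd⟩ := hd
  have hsd : 1 ≤ s d := by
    refine hge.trans ?_
    have : ∀ m ∈ Finset.range K, (if (m : ℝ) * nu = 1 then s m else 0) = if m = d then s m else 0 := by
      intro m _
      congr 1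
      rw [eq_iff_iff]
      constructor
      · intro hm
        have := mul_right_cancel₀ hnu.ne' (hm.trans hd.symm)
        exact_mod_cast this
      · rintro rfl; exact hd
    rw [Finset.sum_congr rfl this, Finset.sum_ite_eq']
    split_ifs
    · exact le_rfl
    · exact hs d
  have hd2 : 2 ≤ d := by
    by_contra hlt
    have : (d : ℝ) ≤ 1 := by exact_mod_cast (by omega : d ≤ 1)
    nlinarith
  have ht : Tendsto (fun M : ℕ => (M : ℝ) ^ nu) atTop atTop :=
    (tendsto_rpow_atTop hnu).comp tendsto_natCast_atTop_atTop
  obtain ⟨N, hN1, hN2⟩ := ((ht.eventually_gt_atTop (d : ℝ)).and (eventually_ge_atTop d)).exists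
  have h1 := h N (by omega)
  have h2 : ∑ m ∈ ({1, d} : Finset ℕ), s m * ((N.descFactorial m : ℕ) : ℝ) ^ nu ≤ N := by
    conv_rhs => rw [h1]
    apply Finset.sum_le_sum_of_subset_of_nonneg
    · intro x hx
      simp at hx ⊢
      omega
    · intro i _ _
      exact mul_nonneg (hs i) (by positivity)
  rw [Finset.sum_pair (by omega), hs1] at h2
  have h3 := lower N d hN2
  rw [hd, Real.rpow_one, Nat.cast_sub (by omega)] at h3
  push_cast at h3
  simp only [Nat.descFactorial_one, one_mul] at h2
  have h4 : (N.descFactorial d : ℝ) ^ nu ≤ s d * (N.descFactorial d : ℝ) ^ nu :=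
    le_mul_of_one_le_left (by positivity) hsd
  linarith

/-- nonneg of log-derivative coefficients -/
theorem cmp_aux_nonneg (P : PowerSeries ℝ) (hP : 0 < PowerSeries.coeff 0 P)
    (h : ∀ m : ℕ, ∃ Q : PowerSeries ℝ, P = Q ^ (m + 1) ∧ (∀ k, 0 ≤ PowerSeries.coeff k Q) ∧
      (∀ k, 1 ≤ k → PowerSeries.coeff k Q ≤ 1 - PowerSeries.coeff 0 Q)) :
    ∃ R : PowerSeries ℝ, PowerSeries.derivative ℝ P = R * P ∧ ∀ k, 0 ≤ PowerSeries.coeff k R := by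
  choose Q hQ hQ0 hQ1 using h
  have hPc : PowerSeries.constantCoeff P ≠ 0 := by
    rw [← PowerSeries.coeff_zero_eq_constantCoeff_apply]; exact hP.ne'
  have hne : P ≠ 0 := by rintro rfl; simp at hP
  refine ⟨PowerSeries.derivative ℝ P * P⁻¹, ?_, ?_⟩
  · rw [mul_assoc, PowerSeries.inv_mul_cancel _ hPc, mul_one]
  set R := PowerSeries.derivative ℝ P * P⁻¹ with hR
  have hRP : R * P = PowerSeries.derivative ℝ P := by
    rw [hR, mul_assoc, PowerSeries.inv_mul_cancel _ hPc, mul_one]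
  have hRQ : ∀ m : ℕ, R * Q m = ((m + 1 : ℕ) : PowerSeries ℝ) * PowerSeries.derivative ℝ (Q m) := by
    intro m
    have hQne : Q m ^ m ≠ 0 := by
      intro h0
      apply hne
      rw [hQ m, pow_succ, h0, zero_mul]
    apply mul_left_cancel₀ hQne
    have h1 := hRP
    rw [hQ m, Derivation.leibniz_pow] at h1
    simp only [Nat.add_sub_cancel, nsmul_eq_mul, smul_eq_mul] at h1
    rw [pow_succ] at h1
    linear_combination h1
  have hnn : ∀ m k, 0 ≤ PowerSeries.coeff k (R * Q m) := by
    intro m k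
    rw [hRQ, ← nsmul_eq_mul, map_nsmul, PowerSeries.coeff_derivative, nsmul_eq_mul]
    have := hQ0 m (k + 1)
    positivity
  have hroot : ∀ m, PowerSeries.coeff 0 (Q m) = (PowerSeries.coeff 0 P) ^ (1 / ((m : ℝ) + 1)) := by
    intro m
    conv_rhs => rw [hQ m]
    rw [PowerSeries.coeff_zero_eq_constantCoeff_apply, PowerSeries.coeff_zero_eq_constantCoeff_apply,
      map_pow]
    have := hQ0 m 0
    rw [PowerSeries.coeff_zero_eq_constantCoeff_apply] at this
    rw [one_div, ← Nat.cast_succ, Real.pow_rpow_inv_natCast this (by omega)]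
  have hq0 : Tendsto (fun m => PowerSeries.coeff 0 (Q m)) atTop (𝓝 1) := by
    simp_rw [hroot]
    have h1 : Tendsto (fun n : ℕ => 1 / ((n : ℝ) + 1)) atTop (𝓝 0) :=
      tendsto_one_div_add_atTop_nhds_zero_nat
    have := (tendsto_const_nhds (x := PowerSeries.coeff 0 P)).rpow h1 (Or.inl hP.ne')
    simpa using this
  have hqk : ∀ k, 1 ≤ k → Tendsto (fun m => PowerSeries.coeff k (Q m)) atTop (𝓝 0) := by
    intro k hk
    refine squeeze_zero (fun m => hQ0 m k) (fun m => hQ1 m k hk) ?_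
    simpa using hq0.const_sub 1
  intro k
  have hlim : Tendsto (fun m => PowerSeries.coeff k (R * Q m)) atTop
      (𝓝 (∑ p ∈ Finset.HasAntidiagonal.antidiagonal k, PowerSeries.coeff p.1 R * if p.2 = 0 then 1 else 0)) := by
    simp_rw [PowerSeries.coeff_mul]
    apply tendsto_finsetSum
    intro p _
    apply Tendsto.const_mul
    split_ifs with hp
    · rw [hp]; exact hq0
    · exact hqk _ (by omega)
  have hval : ∑ p ∈ Finset.HasAntidiagonal.antidiagonal k, PowerSeries.coeff p.1 R * (if p.2 = 0 then 1 else 0) =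
      PowerSeries.coeff k R := by
    rw [Finset.sum_eq_single (k, 0)]
    · simp
    · rintro ⟨i, j⟩ hij hne
      simp at hij hne ⊢
      intro hj
      exfalso
      apply hne (by omega) hj
    · simp
  rw [hval] at hlim
  exact ge_of_tendsto' hlim (fun m => hnn m k)


theorem cmp_aux_support (m : ℕ) (α μ : Measure ℝ) [IsProbabilityMeasure α]
    (h : nfoldConv (m + 1) α = μ) (hsupp : μ (Set.range ((↑) : ℕ → ℝ))ᶜ = 0) (h0 : μ {0} ≠ 0) :
    α (Set.range ((↑) : ℕ → ℝ))ᶜ = 0 := by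
  have hmeas : Measurable (fun x : Fin (m + 1) → ℝ => ∑ i, x i) := by fun_prop
  have hrange : MeasurableSet (Set.range ((↑) : ℕ → ℝ))ᶜ := (Set.countable_range _).measurableSet.compl
  have happ : ∀ s, MeasurableSet s → μ s =
      Measure.pi (fun _ : Fin (m + 1) => α) ((fun x : Fin (m + 1) → ℝ => ∑ i, x i) ⁻¹' s) := by
    intro s hs
    rw [← h, nfoldConv, Measure.map_apply hmeas hs]
  have hneg : α (Set.Iio 0) = 0 := by
    have h1 : Measure.pi (fun _ : Fin (m + 1) => α) (Set.univ.pi fun _ => Set.Iio 0) ≤ 0 := by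
      rw [← hsupp, happ _ hrange]
      apply measure_mono
      intro x hx
      simp only [Set.mem_pi, Set.mem_univ, forall_const, Set.mem_Iio] at hx
      simp only [Set.mem_preimage, Set.mem_compl_iff, Set.mem_range, not_exists]
      intro k hk
      have : ∑ i, x i < 0 := Finset.sum_neg (fun i _ => hx i) Finset.univ_nonempty
      have h2 : (0 : ℝ) ≤ k := by positivity
      linarith
    rw [Measure.pi_pi] at h1
    simpa using h1
  have hq : α {0} ≠ 0 := by
    intro hq
    apply h0
    rw [happ _ (measurableSet_singleton _)]
    have hae : ∀ i : Fin (m + 1), ∀ᵐ x ∂(Measure.pi (fun _ : Fin (m + 1) => α)), 0 < x i := by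
      intro i
      have h1 : ∀ᵐ y ∂α, 0 < y := by
        rw [ae_iff]
        have : {a : ℝ | ¬ 0 < a} = Set.Iio 0 ∪ {0} := by
          ext a; simp [le_iff_lt_or_eq]
        rw [this]
        exact measure_union_null hneg hq
      exact Measure.tendsto_eval_ae_ae.eventually h1
    have hall := ae_all_iff.mpr hae
    rw [ae_iff] at hall
    refine measure_mono_null ?_ hall
    intro x hx hx'
    simp at hx
    have : 0 < ∑ i, x i := Finset.sum_pos (fun i _ => hx' i) Finset.univ_nonempty
    linarith
  have h1 : Measure.pi (fun _ : Fin (m + 1) => α)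
      (Set.univ.pi (Fin.cons (Set.range ((↑) : ℕ → ℝ))ᶜ (fun _ => {0}))) ≤ 0 := by
    rw [← hsupp, happ _ hrange]
    apply measure_mono
    intro x hx
    simp only [Set.mem_pi, Set.mem_univ, forall_const] at hx
    have hx0 := hx 0
    have hxs : ∀ i : Fin m, x i.succ = 0 := fun i => by simpa using hx i.succ
    simp only [Fin.cons_zero] at hx0
    simpa [Fin.sum_univ_succ, hxs] using hx0
  rw [Measure.pi_pi, Fin.prod_univ_succ] at h1
  simp only [Fin.cons_zero, Fin.cons_succ, Finset.prod_const, nonpos_iff_eq_zero, mul_eq_zero] at h1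
  rcases h1 with h1 | h1
  · exact h1
  · exact absurd (by by_contra hc; exact (pow_ne_zero m hc) (by simpa using h1)) hq

theorem cmp_aux_pow (m : ℕ) (α μ : Measure ℝ) [IsProbabilityMeasure α]
    (h : nfoldConv (m + 1) α = μ) (hα : α (Set.range ((↑) : ℕ → ℝ))ᶜ = 0) :
    PowerSeries.mk (fun k : ℕ => μ.real {(k : ℝ)}) =
      (PowerSeries.mk (fun k : ℕ => α.real {(k : ℝ)})) ^ (m + 1) := by
  have hmeas : Measurable (fun x : Fin (m + 1) → ℝ => ∑ i, x i) := by fun_prop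
  ext k
  have e1 : (PowerSeries.mk (fun k : ℕ => α.real {(k : ℝ)})) ^ (m + 1) =
      ∏ _i : Fin (m + 1), PowerSeries.mk (fun k : ℕ => α.real {(k : ℝ)}) := by simp
  rw [e1, PowerSeries.coeff_prod]
  simp only [PowerSeries.coeff_mk]
  set F : Finset (Fin (m + 1) →₀ ℕ) := Finset.univ.finsuppAntidiag k with hF
  have hinj : Function.Injective (fun (f : Fin (m + 1) →₀ ℕ) (i : Fin (m + 1)) => (f i : ℝ)) := by
    intro f g hfg
    ext i
    have : (f i : ℝ) = (g i : ℝ) := congrFun hfg i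
    exact_mod_cast this
  have hset : ((fun x : Fin (m + 1) → ℝ => ∑ i, x i) ⁻¹' {(k : ℝ)} : Set _) =ᵐ[Measure.pi (fun _ : Fin (m + 1) => α)]
      ((F.image (fun f i => (f i : ℝ)) : Finset (Fin (m + 1) → ℝ)) : Set (Fin (m + 1) → ℝ)) := by
    have hae : ∀ i : Fin (m + 1), ∀ᵐ x ∂(Measure.pi (fun _ : Fin (m + 1) => α)),
        x i ∈ Set.range ((↑) : ℕ → ℝ) := by
      intro i
      have h1 : ∀ᵐ y ∂α, y ∈ Set.range ((↑) : ℕ → ℝ) := hα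
      exact Measure.tendsto_eval_ae_ae.eventually h1
    filter_upwards [ae_all_iff.mpr hae] with x hx
    choose g hg using hx
    apply propext
    change (∑ i, x i = (k : ℝ)) ↔ x ∈ ((F.image (fun f i => (f i : ℝ)) : Finset (Fin (m + 1) → ℝ)) : Set (Fin (m + 1) → ℝ))
    simp only [Finset.coe_image, Set.mem_image, Finset.mem_coe, hF, Finset.mem_finsuppAntidiag]
    constructor
    · intro hs
      refine ⟨Finsupp.equivFunOnFinite.symm g, ⟨?_, by simp⟩, ?_⟩
      · simp_rw [← hg] at hs
        have : ∑ i, g i = k := by exact_mod_cast hs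
        simpa using this
      · ext i; simpa using hg i
    · rintro ⟨f, ⟨hf, -⟩, rfl⟩
      change ∑ i, (f i : ℝ) = k
      rw [← hf]; push_cast; rfl
  rw [← h, nfoldConv, map_measureReal_apply hmeas (measurableSet_singleton _), measureReal_congr hset,
    ← sum_measureReal_singleton, Finset.sum_image (fun a _ b _ hab => hinj hab)]
  apply Finset.sum_congr rfl
  intro f _
  rw [measureReal_def, Measure.pi_singleton, ENNReal.toReal_prod]
  rfl

theorem cmp_aux_le (α : Measure ℝ) [IsProbabilityMeasure α] (k : ℕ) (hk : 1 ≤ k) :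
    α.real {(k : ℝ)} ≤ 1 - α.real {((0 : ℕ) : ℝ)} := by
  have hd : Disjoint ({(k : ℝ)} : Set ℝ) {((0 : ℕ) : ℝ)} := by
    rw [Set.disjoint_singleton]
    exact_mod_cast (by omega : k ≠ 0)
  have := measureReal_union (μ := α) hd (measurableSet_singleton _)
  have h2 := measureReal_le_one (μ := α) (s := {(k : ℝ)} ∪ {((0 : ℕ) : ℝ)})
  linarith

theorem cmp_aux_singleton (c : ℕ → ENNReal) (k : ℕ) :
    (Measure.sum fun k : ℕ => c k • Measure.dirac (k : ℝ)) {(k : ℝ)} = c k := by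
  rw [Measure.sum_apply _ (measurableSet_singleton _), tsum_eq_single k]
  · simp
  · intro j hj
    simp [hj]

theorem cmp_aux_range (c : ℕ → ENNReal) :
    (Measure.sum fun k : ℕ => c k • Measure.dirac (k : ℝ)) (Set.range ((↑) : ℕ → ℝ))ᶜ = 0 := by
  rw [Measure.sum_apply _ (Set.countable_range _).measurableSet.compl]
  simp

/-- For every `λ > 0` and every `ν` with `0 < ν < 1`, the Conway–Maxwell–Poisson
distribution `CMP(λ, ν)` is not infinitely divisible. -/
theorem cmp_not_infinitelyDivisible_of_lt_one (lam nu : ℝ)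
    (hlam : 0 < lam) (hnu : 0 < nu) (hnu1 : nu < 1) :
    ¬ InfinitelyDivisible (cmpMeasure lam nu) := by
  intro hID
  set μ := cmpMeasure lam nu with hμ
  set Z : ℝ := ∑' j : ℕ, lam ^ j / (j.factorial : ℝ) ^ nu with hZ
  have hZ0 : 0 ≤ Z := tsum_nonneg (fun j => by positivity)
  have hprob : IsProbabilityMeasure μ := by
    obtain ⟨α, hα, h⟩ := hID 1 one_pos
    rw [← h, nfoldConv]
    exact Measure.isProbabilityMeasure_map (by fun_prop)
  have hZpos : 0 < Z := by
    refine lt_of_le_of_ne hZ0 (fun h0 => ?_)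
    have : μ = 0 := by
      rw [hμ, cmpMeasure, ← hZ, ← h0]
      simp
    exact IsProbabilityMeasure.ne_zero μ this
  set b : ℕ → ℝ := fun k => (lam ^ k / (k.factorial : ℝ) ^ nu) / Z with hb
  have hbpos : ∀ k, 0 < b k := fun k => by
    have : (0 : ℝ) < (k.factorial : ℝ) := by exact_mod_cast k.factorial_pos
    simp only [hb]; positivity
  have hμk : ∀ k : ℕ, μ {(k : ℝ)} = ENNReal.ofReal (b k) := fun k =>
    cmp_aux_singleton (fun k => ENNReal.ofReal (b k)) k
  have hμr : ∀ k : ℕ, μ.real {(k : ℝ)} = b k := fun k => by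
    rw [measureReal_def, hμk, ENNReal.toReal_ofReal (hbpos k).le]
  have hμs : μ (Set.range ((↑) : ℕ → ℝ))ᶜ = 0 := cmp_aux_range (fun k => ENNReal.ofReal (b k))
  have hμ0 : μ {0} ≠ 0 := by
    have := hμk 0
    rw [Nat.cast_zero] at this
    rw [this]
    simpa using hbpos 0
  obtain ⟨R, hR, hR0⟩ := cmp_aux_nonneg (PowerSeries.mk (fun k : ℕ => μ.real {(k : ℝ)}))
    (by rw [PowerSeries.coeff_mk, hμr]; exact hbpos 0)
    (by
      intro m
      obtain ⟨α, hα, h⟩ := hID (m + 1) (Nat.succ_pos m)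
      have hs := cmp_aux_support m α μ h hμs hμ0
      refine ⟨_, cmp_aux_pow m α μ h hs, ?_, ?_⟩
      · intro k
        rw [PowerSeries.coeff_mk]
        exact measureReal_nonneg
      · intro k hk
        rw [PowerSeries.coeff_mk, PowerSeries.coeff_mk]
        exact cmp_aux_le α k hk)
  refine cmp_aux_real (fun m => PowerSeries.coeff (m - 1) R / lam ^ m) nu hnu hnu1
    (fun m => div_nonneg (hR0 _) (by positivity)) ?_
  intro N hN
  obtain ⟨k, rfl⟩ : ∃ k, N = k + 1 := ⟨N - 1, by omega⟩
  have hc := congrArg (PowerSeries.coeff k) hR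
  rw [PowerSeries.coeff_derivative, PowerSeries.coeff_mul,
    Finset.Nat.sum_antidiagonal_eq_sum_range_succ_mk] at hc
  simp only [PowerSeries.coeff_mk, hμr] at hc
  have hc2 : ((k + 1 : ℕ) : ℝ) = ∑ j ∈ Finset.range (k + 1),
      PowerSeries.coeff j R * b (k - j) / b (k + 1) := by
    rw [← Finset.sum_div, eq_div_iff (hbpos _).ne', mul_comm]
    push_cast
    exact hc
  rw [hc2]
  have hI : Finset.Icc 1 (k + 1) = Finset.Ico 1 (k + 2) := by ext x; simp; omega
  rw [hI, Finset.sum_Ico_eq_sum_range]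
  apply Finset.sum_congr rfl
  intro j hj
  have hjk : j < k + 1 := Finset.mem_range.mp hj
  have hf := Nat.factorial_mul_descFactorial (n := k + 1) (k := j + 1) (by omega)
  have e1 : k + 1 - (j + 1) = k - j := by omega
  rw [e1] at hf
  have hfr : ((k + 1).factorial : ℝ) = ((k - j).factorial : ℝ) * ((k + 1).descFactorial (j + 1) : ℝ) := by
    exact_mod_cast hf.symm
  have hp1 : (0 : ℝ) < ((k - j).factorial : ℝ) := by exact_mod_cast Nat.factorial_pos _
  have hp2 : (0 : ℝ) < ((k + 1).factorial : ℝ) := by exact_mod_cast Nat.factorial_pos _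
  have hp3 : (0 : ℝ) < ((k + 1).descFactorial (j + 1) : ℝ) := by
    rw [hfr] at hp2
    exact (mul_pos_iff_of_pos_left hp1).mp hp2
  have hlamp : lam ^ (k + 1) = lam ^ (k - j) * lam ^ (j + 1) := by
    rw [← pow_add]; congr 1; omega
  simp only [hb]
  rw [add_comm 1 j, Nat.add_sub_cancel, hfr, Real.mul_rpow hp1.le hp3.le, hlamp]
  have q1 := Real.rpow_pos_of_pos hp1 nu
  have q3 := Real.rpow_pos_of_pos hp3 nu
  field_simp
end
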